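/- Let m ≥ 2 and let F(x) = −ln det(x) be the log-determinant barrier on the cone S^m_{++} of symmetric positive definite m×m real matrices. Then for all x, s ∈ S^m_{++}, 1/λ_min(s^{1/2} x s^{1/2}) ≤ ρ_m·(tr(x^{-1}s^{-1}) − m(m−1)/tr(xs)), and ρ_m is the smallest constant for which this holds for all x, s ∈ S^m_{++}. Equivalently, the supremum over x, s ∈ S^m_{++} of [1/λ_min(s^{1/2} x s^{1/2})] / [tr(x^{-1}s^{-1}) − m(m−1)/tr(xs)] equals ρ_m. -/

import Mathlib

open scoped BigOperators
open Matrix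
open scoped MatrixOrder

noncomputable section

/-- The smallest eigenvalue of a matrix `M` (for real symmetric `M` this is the usual
minimal eigenvalue `λ_min(M)`). -/
def minEig {m : ℕ} (M : Matrix (Fin m) (Fin m) ℝ) : ℝ :=
  sInf {r : ℝ | ∃ v : Fin m → ℝ, v ≠ 0 ∧ M *ᵥ v = r • v}

theorem minEig_eq_sInf_spectrum {m : ℕ} (M : Matrix (Fin m) (Fin m) ℝ) :
    minEig M = sInf (spectrum ℝ M) := by
  unfold minEig
  congr 1
  ext r
  rw [← Matrix.spectrum_toLin', ← Module.End.hasEigenvalue_iff_mem_spectrum]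
  constructor
  · rintro ⟨v, hv, h⟩
    exact Module.End.hasEigenvalue_of_hasEigenvector (x := v)
      ⟨Module.End.mem_eigenspace_iff.2 (by simpa using h), hv⟩
  · intro h
    obtain ⟨v, hv⟩ := h.exists_hasEigenvector
    exact ⟨v, hv.2, by simpa using hv.apply_eq_smul⟩

theorem trace_inv_eq_sum_inv_eigenvalues {n : Type*} [Fintype n] [DecidableEq n]
    {M : Matrix n n ℝ} (hM : M.PosDef) :
    M⁻¹.trace = ∑ i, (hM.1.eigenvalues i)⁻¹ := by
  set φ := Unitary.conjStarAlgAut ℝ (Matrix n n ℝ) hM.1.eigenvectorUnitary with hφ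
  have hspec : M = φ (diagonal hM.1.eigenvalues) := hM.1.spectral_theorem
  have hinv : M⁻¹ = φ (diagonal fun i => (hM.1.eigenvalues i)⁻¹) := by
    apply Matrix.inv_eq_right_inv
    calc M * φ (diagonal fun i => (hM.1.eigenvalues i)⁻¹)
        = φ (diagonal hM.1.eigenvalues) * φ (diagonal fun i => (hM.1.eigenvalues i)⁻¹) :=
          congrArg (· * φ (diagonal fun i => (hM.1.eigenvalues i)⁻¹)) hspec
      _ = 1 := by
          rw [← map_mul, diagonal_mul_diagonal]
          simp [(hM.eigenvalues_pos _).ne']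
  rw [hinv, hφ, Unitary.conjStarAlgAut_apply, trace_mul_cycle, Unitary.coe_star_mul_self, one_mul,
    trace_diagonal]

/-- Sharp bound on a single reciprocal, from the weighted Cauchy–Schwarz inequality
with weight `1 / (τ + 1)` at `j` and `1` elsewhere. -/
theorem one_div_le_mul_sum_inv_sub {ι : Type*} [Fintype ι] {τ : ℝ}
    (hτ : 0 < τ) (hcard : (τ ^ 2 - 1) * ((Fintype.card ι : ℝ) - 1) = 1)
    {v : ι → ℝ} (hv : ∀ i, 0 < v i) (j : ι) :
    1 / v j ≤ (τ + 1) ^ 2 / (τ * (τ + 2)) *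
      (∑ i, (v i)⁻¹ - (Fintype.card ι : ℝ) * ((Fintype.card ι : ℝ) - 1) / ∑ i, v i) := by
  classical
  set m : ℝ := (Fintype.card ι : ℝ)
  let w : ι → ℝ := Function.update 1 j (1 / (τ + 1))
  have key := Finset.sq_sum_div_le_sum_sq_div Finset.univ w (fun i _ => hv i)
  have hw : ∑ i, w i = 1 / (τ + 1) + (m - 1) := by
    rw [Finset.sum_update_of_mem (Finset.mem_univ j)]
    have h := Finset.sum_sdiff (f := fun _ : ι => (1 : ℝ)) (Finset.subset_univ {j})
    simp only [Finset.sum_const, Finset.card_singleton, Finset.card_univ, nsmul_eq_mul] at h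
    simp only [Pi.one_apply, Finset.sum_const, nsmul_eq_mul]
    push_cast at h
    linarith
  have hwv : ∑ i, w i ^ 2 / v i = ∑ i, (v i)⁻¹ - (1 - 1 / (τ + 1) ^ 2) * (1 / v j) := by
    rw [← Finset.add_sum_erase _ _ (Finset.mem_univ j),
      ← Finset.add_sum_erase Finset.univ (fun i => (v i)⁻¹) (Finset.mem_univ j)]
    have h : ∑ i ∈ Finset.univ.erase j, w i ^ 2 / v i = ∑ i ∈ Finset.univ.erase j, (v i)⁻¹ := by
      refine Finset.sum_congr rfl fun i hi => ?_
      simp [w, Function.update_of_ne (Finset.ne_of_mem_erase hi)]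
    rw [h]
    simp only [w, Function.update_self, div_pow, one_pow]
    ring
  have hsq : (1 / (τ + 1) + (m - 1)) ^ 2 = m * (m - 1) := by
    have h : 1 / (τ + 1) = (τ - 1) * (m - 1) := by
      field_simp
      linear_combination -hcard
    rw [h]
    linear_combination (m - 1) * hcard
  rw [hw, hsq, hwv] at key
  have h : 1 / v j =
      (τ + 1) ^ 2 / (τ * (τ + 2)) * ((1 - 1 / (τ + 1) ^ 2) * (1 / v j)) := by
    have := (hv j).ne'
    field_simp
    ring
  rw [h]
  gcongr
  linarith

theorem one_div_minEig_le {m : ℕ} [NeZero m] {τ : ℝ} (hτ : 0 < τ)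
    (hcard : (τ ^ 2 - 1) * ((m : ℝ) - 1) = 1) {M : Matrix (Fin m) (Fin m) ℝ} (hM : M.PosDef) :
    1 / minEig M ≤ (τ + 1) ^ 2 / (τ * (τ + 2)) *
      (M⁻¹.trace - (m : ℝ) * ((m : ℝ) - 1) / M.trace) := by
  obtain ⟨j, hj⟩ := Finite.exists_min hM.1.eigenvalues
  have hmin : minEig M = hM.1.eigenvalues j := by
    rw [minEig_eq_sInf_spectrum, hM.1.spectrum_real_eq_range_eigenvalues]
    exact IsLeast.csInf_eq ⟨⟨j, rfl⟩, by rintro _ ⟨i, rfl⟩; exact hj i⟩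
  have h := one_div_le_mul_sum_inv_sub hτ (by simpa using hcard) hM.eigenvalues_pos j
  rw [hmin, trace_inv_eq_sum_inv_eigenvalues hM, hM.1.trace_eq_sum_eigenvalues]
  simpa using h

theorem posDef_sqrt_mul_mul_sqrt {n : Type*} [Fintype n] [DecidableEq n]
    {x s : Matrix n n ℝ} (hx : x.PosDef) (hs : s.PosDef) :
    (CFC.sqrt s * x * CFC.sqrt s).PosDef := by
  have hu : IsUnit (CFC.sqrt s) := (CFC.isUnit_sqrt_iff s hs.posSemidef.nonneg).2 hs.isUnit
  have hstar : star (CFC.sqrt s) = CFC.sqrt s := (CFC.sqrt_nonneg s).isSelfAdjoint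
  have h := (hu.posDef_star_left_conjugate_iff (x := x)).2 hx
  rwa [hstar] at h

theorem trace_sqrt_mul_mul_sqrt {n : Type*} [Fintype n] [DecidableEq n]
    (x : Matrix n n ℝ) {s : Matrix n n ℝ} (hs : s.PosDef) :
    (CFC.sqrt s * x * CFC.sqrt s).trace = (x * s).trace := by
  rw [trace_mul_cycle, CFC.sqrt_mul_sqrt_self s hs.posSemidef.nonneg, trace_mul_comm]

theorem trace_inv_sqrt_mul_mul_sqrt {n : Type*} [Fintype n] [DecidableEq n]
    (x : Matrix n n ℝ) {s : Matrix n n ℝ} (hs : s.PosDef) :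
    (CFC.sqrt s * x * CFC.sqrt s)⁻¹.trace = (x⁻¹ * s⁻¹).trace := by
  rw [Matrix.mul_inv_rev, Matrix.mul_inv_rev, ← Matrix.mul_assoc, trace_mul_cycle, trace_mul_comm,
    ← Matrix.mul_inv_rev, CFC.sqrt_mul_sqrt_self s hs.posSemidef.nonneg, trace_mul_comm]

/-- For the log-determinant barrier `F(x) = −ln det x` on `S^m₊₊` (`m ≥ 2`):
for all symmetric positive definite `x, s`,
`1/λ_min(s^{1/2} x s^{1/2}) ≤ ρ_m (tr(x⁻¹s⁻¹) − m(m−1)/tr(xs))`, and `ρ_m` is the smallest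
constant for which this holds; equivalently the supremum over `x, s` of the ratio of the
two sides equals `ρ_m`. -/
theorem stmt14 (m : ℕ) (hm : 2 ≤ m) :
    let τ : ℝ := Real.sqrt ((m : ℝ) / ((m : ℝ) - 1))
    let ρ : ℝ := (τ + 1)^2 / (τ * (τ + 2))
    (∀ x s : Matrix (Fin m) (Fin m) ℝ, ∀ (_hx : x.PosDef) (hs : s.PosDef),
      1 / minEig (CFC.sqrt s * x * CFC.sqrt s) ≤
        ρ * ((x⁻¹ * s⁻¹).trace - (m : ℝ) * ((m : ℝ) - 1) / (x * s).trace)) ∧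
    (∀ c : ℝ,
      (∀ x s : Matrix (Fin m) (Fin m) ℝ, ∀ (_hx : x.PosDef) (hs : s.PosDef),
        1 / minEig (CFC.sqrt s * x * CFC.sqrt s) ≤
          c * ((x⁻¹ * s⁻¹).trace - (m : ℝ) * ((m : ℝ) - 1) / (x * s).trace)) →
      ρ ≤ c) := by
  intro τ ρ
  have : NeZero m := ⟨by omega⟩
  have hm1 : (0 : ℝ) < (m : ℝ) - 1 := by
    have : (2 : ℝ) ≤ m := by exact_mod_cast hm
    linarith
  have hτ : 0 < τ := Real.sqrt_pos.2 (by positivity)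
  have hτsq : τ ^ 2 = m / ((m : ℝ) - 1) := Real.sq_sqrt (by positivity)
  have hcard : (τ ^ 2 - 1) * ((m : ℝ) - 1) = 1 := by
    rw [hτsq]
    field_simp
    ring
  refine ⟨fun x s hx hs => ?_, fun c hc => ?_⟩
  · have h := one_div_minEig_le hτ hcard (posDef_sqrt_mul_mul_sqrt hx hs)
    rwa [trace_sqrt_mul_mul_sqrt x hs, trace_inv_sqrt_mul_mul_sqrt x hs] at h
  · let d : Fin m → ℝ := Function.update (fun _ => τ + 1) 0 1
    have hd : ∀ i, 1 ≤ d i := fun i => by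
      by_cases hi : i = 0
      · simp [d, hi]
      · simp [d, Function.update_of_ne hi, hτ.le]
    have hmin : minEig (diagonal d) = 1 := by
      rw [minEig_eq_sInf_spectrum, spectrum_diagonal]
      exact IsLeast.csInf_eq ⟨⟨0, by simp [d]⟩, by rintro _ ⟨i, rfl⟩; exact hd i⟩
    have hinv : (diagonal d)⁻¹ = diagonal fun i => (d i)⁻¹ :=
      Matrix.inv_eq_right_inv (by
        simp [diagonal_mul_diagonal, fun i => (zero_lt_one.trans_le (hd i)).ne'])
    have hcast : ((Finset.univ \ {(0 : Fin m)}).card : ℝ) = (m : ℝ) - 1 := by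
      rw [Finset.card_sdiff_of_subset (Finset.subset_univ _)]
      simp [Nat.cast_sub (show 1 ≤ m by omega)]
    have hsum : ∑ i, d i = 1 + ((m : ℝ) - 1) * (τ + 1) := by
      rw [Finset.sum_update_of_mem (Finset.mem_univ _), Finset.sum_const, nsmul_eq_mul, hcast]
    have hsuminv : ∑ i, (d i)⁻¹ = 1 + ((m : ℝ) - 1) * (τ + 1)⁻¹ := by
      have h : (fun i => (d i)⁻¹) = Function.update (fun _ => (τ + 1)⁻¹) 0 1 := by
        ext i
        by_cases hi : i = 0
        · simp [d, hi]
        · simp [d, Function.update_of_ne hi]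
      rw [h, Finset.sum_update_of_mem (Finset.mem_univ _), Finset.sum_const, nsmul_eq_mul, hcast]
    have h := hc (diagonal d) 1 (PosDef.diagonal fun i => zero_lt_one.trans_le (hd i)) PosDef.one
    rw [CFC.sqrt_one, one_mul, mul_one, hmin, inv_one, mul_one, hinv, trace_diagonal,
      trace_diagonal, hsum, hsuminv] at h
    have hval : 1 + ((m : ℝ) - 1) * (τ + 1)⁻¹ -
        m * ((m : ℝ) - 1) / (1 + ((m : ℝ) - 1) * (τ + 1)) = τ * (τ + 2) / (τ + 1) ^ 2 := by
      have h1 : 1 + ((m : ℝ) - 1) * (τ + 1) = ((m : ℝ) - 1) * τ * (τ + 1) := by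
        linear_combination -hcard
      have h2 : (m : ℝ) * ((m : ℝ) - 1) / (((m : ℝ) - 1) * τ * (τ + 1)) =
          ((m : ℝ) - 1) * τ * (τ + 1)⁻¹ := by
        field_simp
        linear_combination -hcard
      rw [h1, h2]
      field_simp
      linear_combination -hcard
    rw [hval, ← mul_div_assoc, le_div_iff₀ (by positivity)] at h
    rw [div_le_iff₀ (by positivity)]
    linarith
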